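/- Let e ≥ 2 and let f : F_q → F_p belong to the class RF with sign ε and dual f*. Then C_f is an F_p-linear code of length q = p^e and dimension e + 2. If e is even, with σ = ε(η_0(−1))^{e/2}, the multiset of Hamming weights of its codewords consists of: weight 0 with multiplicity 1; weight p^e − p^{e−1} − σ(p−1)p^{e/2−1} with multiplicity (p−1)p^e; weight p^e − p^{e−1} + σ p^{e/2−1} with multiplicity (p−1)² p^e; weight p^e − p^{e−1} with multiplicity p(p^e − 1); and weight p^e with multiplicity p − 1. If e is odd, with τ = ε(η_0(−1))^{(e+1)/2}, the multiset of weights consists of: weight 0 with multiplicity 1; weight p^e − p^{e−1} − τ p^{(e−1)/2} with multiplicity (p−1)² p^e / 2; weight p^e − p^{e−1} + τ p^{(e−1)/2} with multiplicity (p−1)² p^e / 2; weight p^e − p^{e−1} with multiplicity 2p^{e+1} − p^e − p; and weight p^e with multiplicity p − 1. Moreover, C_f is self-orthogonal (C_f ⊆ C_f^⊥) whenever e ≥ 3. The dual code C_f^⊥ has length p^e, dimension p^e − e − 2, and minimum distance 4 if e = 2 and ε η_0(−1) = −1, and minimum distance 3 in all other cases. -/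

import Mathlib

open scoped Classical

noncomputable section

/-- The complex primitive `p`-th root of unity `ζ_p = exp(2πi/p)`. -/
def zetapc (p : ℕ) : ℂ := Complex.exp (2 * Real.pi * Complex.I / p)

/-- `√p* = i^{((p-1)/2)²} √p`, a square root of `p* = (-1)^{(p-1)/2} p`. -/
def sqrtpstar (p : ℕ) : ℂ := Complex.I ^ (((p - 1) / 2) ^ 2) * (Real.sqrt p : ℂ)

/-- The quadratic character of a finite field: `1` on nonzero squares, `-1` on
nonsquares, `0` at `0`. -/
def qchar (F : Type*) [MonoidWithZero F] : F → ℤ :=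
  fun y => if y = 0 then 0 else if IsSquare y then 1 else -1

/-- `f : F_q → F_p` belongs to the class `RF` of weakly regular bent functions,
with sign `ε` and dual `fstar`. -/
structure IsRF (p e : ℕ) (Fq : Type*) [Field Fq] [Fintype Fq] [Algebra (ZMod p) Fq]
    (f : Fq → ZMod p) (ε : ℤ) (fstar : Fq → ZMod p) : Prop where
  sign : ε = 1 ∨ ε = -1
  map_zero : f 0 = 0
  hom : ∃ h : ℕ, Even h ∧ 0 < h ∧ Nat.gcd (h - 1) (p - 1) = 1 ∧
    ∀ a : ZMod p, a ≠ 0 → ∀ x : Fq,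
      f (algebraMap (ZMod p) Fq a * x) = a ^ h * f x
  walsh : ∀ β : Fq,
    (∑ x : Fq, zetapc p ^ (f x - Algebra.trace (ZMod p) Fq (β * x)).val)
      = (ε : ℂ) * sqrtpstar p ^ e * zetapc p ^ (fstar β).val

/-- The code `C_f` attached to `f`. -/
def rfCode (p : ℕ) (Fq : Type*) [Field Fq] [Fintype Fq] [Algebra (ZMod p) Fq]
    (f : Fq → ZMod p) : Set (Fq → ZMod p) :=
  {w | ∃ a c : ZMod p, ∃ b : Fq, ∀ x : Fq,
    w x = a * f x + Algebra.trace (ZMod p) Fq (b * x) + c}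

/-- The dual code under the standard inner product. -/
def dualCode {ι F : Type*} [Fintype ι] [CommRing F] (C : Set (ι → F)) : Set (ι → F) :=
  {u | ∀ v ∈ C, ∑ i, u i * v i = 0}

/-- `d` is the minimum distance of the code `C`: the smallest Hamming weight of a
nonzero codeword. -/
def IsMinDist {ι F : Type*} [Fintype ι] [CommRing F] (C : Set (ι → F)) (d : ℕ) : Prop :=
  (∃ c ∈ C, c ≠ 0 ∧ hammingNorm c = d) ∧ ∀ c ∈ C, c ≠ 0 → d ≤ hammingNorm c

/-! The Krawtchouk value `K₁(wt w)` of a word is the sum of the character sums of all its nonzero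
multiples. For `w = a f + Tr(b ·) + c` with `a ≠ 0` these are Galois conjugates of a single Walsh
value, since `√p*` is a quadratic Gauss sum up to sign; as `c` varies, the constant term of the
phase runs through `F_p`, which gives the weights with their multiplicities.

All of them are divisible by `p` once `e ≥ 3`. In a code with this property containing `1`, each
letter occurs a multiple of `p` times in each word, hence `∑ w(x)² = 0`, and self-orthogonality
follows by polarization.

The linear forms in `C_f` separate points, so words of `C_f^⊥` have weight at least `3`. The third
moment of `K₁` counts the expressions of dual words as sums of three weighted unit vectors. It
exceeds the number of such expressions of `0` exactly when there is a dual word of weight `3`,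
which fails only for `e = 2` and `ε η₀(-1) = -1`. In that case some word of the 4-dimensional code
`C_f` has `p + 1 ≥ 4` zeros. So restricting `C_f` to four of them is not injective, hence not
surjective, and a dual word is supported on these four positions. -/

open Finset

section Codes

variable {ι F : Type*} [Fintype ι] [Field F]

/-- The multiset of Hamming weights of the words of a code, as integers. -/
def weightDistribution [Fintype F] [DecidableEq F] (C : Set (ι → F)) : Multiset ℤ :=
  C.toFinset.val.map fun c => (hammingNorm c : ℤ)

/-- The first Krawtchouk polynomial `K₁(t) = (s - 1) n - s t` for words of length `n` over an
alphabet of size `s`, evaluated at a weight `t`. -/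
def krawtchouk₁ (s n : ℕ) (t : ℤ) : ℤ := (s - 1) * n - s * t

theorem isMinDist_iff [DecidableEq F] {C : Set (ι → F)} {d : ℕ} :
    IsMinDist C d ↔ (∃ c ∈ C, c ≠ 0 ∧ hammingNorm c = d) ∧ ∀ c ∈ C, c ≠ 0 → d ≤ hammingNorm c := by
  unfold IsMinDist
  convert Iff.rfl

theorem mem_weightDistribution [Fintype F] [DecidableEq F] {C : Set (ι → F)} {t : ℤ} :
    t ∈ weightDistribution C ↔ ∃ c ∈ C, (hammingNorm c : ℤ) = t := by
  simp [weightDistribution]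

theorem sum_map_weightDistribution [Fintype F] [DecidableEq F] {R : Type*} [AddCommMonoid R]
    (C : Set (ι → F)) [Fintype C] (g : ℤ → R) :
    ((weightDistribution C).map g).sum = ∑ c : C, g (hammingNorm (c : ι → F)) := by
  rw [sum_set_coe (f := fun c => g (hammingNorm c)), weightDistribution, Multiset.map_map,
    ← Finset.sum_eq_multiset_sum]
  congr!

theorem weightDistribution_range [Fintype F] [DecidableEq F] {M : Type*} [Fintype M]
    {φ : M → ι → F} (hφ : Function.Injective φ) :
    weightDistribution (Set.range φ) = ∑ v, ({(hammingNorm (φ v) : ℤ)} : Multiset ℤ) := by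
  rw [← Multiset.sum_map_singleton (weightDistribution (Set.range φ)), sum_map_weightDistribution]
  exact ((Equiv.ofInjective φ hφ).sum_comp
    fun c => ({(hammingNorm (c : ι → F) : ℤ)} : Multiset ℤ)).symm

theorem hammingNorm_add_card_zeros [DecidableEq F] (w : ι → F) :
    hammingNorm w + #{x | w x = 0} = Fintype.card ι := by
  rw [hammingNorm, add_comm, card_filter_add_card_filter_not, card_univ]

theorem sum_units_add_zero [Fintype F] [Fintype Fˣ] {R : Type*} [AddCommMonoid R] (g : F → R) :
    (∑ y : Fˣ, g y) + g 0 = ∑ y, g y := by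
  rw [← sum_erase_add univ g (mem_univ 0), sum_subtype (p := (· ≠ 0)) _ (by simp) g]
  exact congrArg (· + g 0) (Fintype.sum_equiv unitsEquivNeZero (fun y : Fˣ => g y) _ fun _ => rfl)

theorem sum_units_addChar [Fintype F] [DecidableEq F] {ψ : AddChar F ℂ} (hψ : ψ.IsPrimitive)
    (t : F) : ∑ y : Fˣ, ψ (y * t) = (if t = 0 then (Fintype.card F : ℂ) else 0) - 1 := by
  rw [eq_sub_iff_add_eq]
  simpa using (sum_units_add_zero fun y => ψ (y * t)).trans (AddChar.sum_mulShift t hψ)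

theorem krawtchouk₁_hammingNorm [Fintype F] [DecidableEq F] {ψ : AddChar F ℂ}
    (hψ : ψ.IsPrimitive) (w : ι → F) :
    (krawtchouk₁ (Fintype.card F) (Fintype.card ι) (hammingNorm w) : ℂ) =
      ∑ x, ∑ y : Fˣ, ψ (y * w x) := by
  have hzeros : (hammingNorm w : ℂ) + #{x | w x = 0} = Fintype.card ι := by
    exact_mod_cast hammingNorm_add_card_zeros w
  simp only [sum_units_addChar hψ, sum_sub_distrib, ← sum_filter, sum_const, nsmul_eq_mul,
    card_univ, mul_one, krawtchouk₁]
  push_cast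
  linear_combination (-Fintype.card F : ℂ) * hzeros

theorem sum_addChar_sum_mul [Finite F] {ψ : AddChar F ℂ} (hψ : ψ.IsPrimitive)
    (C : Submodule F (ι → F)) [Fintype C] (u : ι → F) :
    ∑ c : C, ψ (∑ i, u i * (c : ι → F) i) =
      if u ∈ dualCode (C : Set (ι → F)) then (Nat.card C : ℂ) else 0 := by
  let dot : C →ₗ[F] F := (dotProductBilin F F u).domRestrict C
  have htrivial : ψ.compAddMonoidHom dot.toAddMonoidHom = 0 ↔ u ∈ dualCode (C : Set (ι → F)) := by
    constructor
    · intro h v hv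
      by_contra hne
      refine hψ hne (DFunLike.ext _ _ fun s => ?_)
      have hs : ψ (dot (s • ⟨v, hv⟩)) = 1 := DFunLike.congr_fun h (s • ⟨v, hv⟩)
      rwa [map_smul, smul_eq_mul, mul_comm] at hs
    · refine fun h => DFunLike.ext _ _ fun c => ?_
      have hc : dot c = 0 := h c c.2
      simp [hc]
  have hsum := AddChar.sum_eq_ite (ψ.compAddMonoidHom dot.toAddMonoidHom)
  simp only [htrivial, ← Nat.card_eq_fintype_card] at hsum
  exact hsum

/-- The word `∑ᵢ yᵢ δ_{xᵢ}` given by a list of positions `xᵢ`, possibly repeated, and nonzero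
letters `yᵢ`. -/
def sumSingle {m : ℕ} (z : Fin m → ι × Fˣ) : ι → F :=
  ∑ i, Pi.single (z i).1 ((z i).2 : F)

theorem sum_sumSingle_mul {m : ℕ} (z : Fin m → ι × Fˣ) (c : ι → F) :
    ∑ x, sumSingle z x * c x = ∑ i, ((z i).2 : F) * c (z i).1 := by
  simp_rw [sumSingle, Finset.sum_apply, sum_mul]
  rw [sum_comm]
  simp [Pi.single_apply]

theorem addChar_map_sum {A M κ : Type*} [AddCommMonoid A] [CommMonoid M] (ψ : AddChar A M)
    (s : Finset κ) (g : κ → A) : ψ (∑ i ∈ s, g i) = ∏ i ∈ s, ψ (g i) :=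
  map_prod (M := Multiplicative A) ψ.toMonoidHom (fun i => Multiplicative.ofAdd (g i)) s

theorem sum_krawtchouk₁_pow [Fintype F] [DecidableEq F] (C : Submodule F (ι → F)) (m : ℕ) :
    ((weightDistribution (C : Set (ι → F))).map fun t =>
        krawtchouk₁ (Fintype.card F) (Fintype.card ι) t ^ m).sum =
      Nat.card C * #{z : Fin m → ι × Fˣ | sumSingle z ∈ dualCode (C : Set (ι → F))} := by
  have hψ := AddChar.FiniteField.primitiveChar_to_Complex_isPrimitive F
  set ψ := AddChar.FiniteField.primitiveChar_to_Complex F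
  have hpow (c : ι → F) : (krawtchouk₁ (Fintype.card F) (Fintype.card ι) (hammingNorm c) : ℂ) ^ m =
      ∑ z : Fin m → ι × Fˣ, ψ (∑ x, sumSingle z x * c x) := by
    rw [krawtchouk₁_hammingNorm hψ, ← Fintype.sum_prod_type' fun x (y : Fˣ) => ψ (y * c x),
      Fintype.sum_pow]
    simp_rw [sum_sumSingle_mul]
    exact sum_congr rfl fun z _ => (addChar_map_sum ψ univ _).symm
  rw [sum_map_weightDistribution, ← Int.cast_inj (α := ℂ)]
  push_cast
  rw [sum_congr rfl fun (c : C) _ => hpow c, sum_comm, sum_congr rfl fun z _ =>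
    sum_addChar_sum_mul hψ C (sumSingle z), ← sum_filter, sum_const, nsmul_eq_mul, mul_comm]

theorem hammingNorm_sumSingle_le [DecidableEq F] {m : ℕ} (z : Fin m → ι × Fˣ) :
    hammingNorm (sumSingle z) ≤ m := by
  have hsupport : ({x | sumSingle z x ≠ 0} : Finset ι) ⊆ univ.image fun i => (z i).1 := by
    intro x hx
    by_contra hnotMem
    simp only [mem_image, mem_univ, true_and, not_exists] at hnotMem
    refine (mem_filter.mp hx).2 ?_
    rw [sumSingle, Finset.sum_apply]
    exact sum_eq_zero fun i _ => Pi.single_eq_of_ne' (hnotMem i) _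
  exact (card_le_card hsupport).trans (card_image_le.trans_eq (card_fin m))

theorem exists_sumSingle_eq [DecidableEq F] {u : ι → F} {m : ℕ} (hnorm : hammingNorm u = m) :
    ∃ z : Fin m → ι × Fˣ, sumSingle z = u := by
  subst hnorm
  let support : Finset ι := {x | u x ≠ 0}
  let letter (x : support) : Fˣ := Units.mk0 (u x) (mem_filter.mp x.2).2
  refine ⟨fun i => (support.equivFin.symm i, letter (support.equivFin.symm i)), funext fun y => ?_⟩
  have hsum : ∑ x : support, (Pi.single (x : ι) (u x) : ι → F) y = u y := by
    rw [sum_coe_sort support fun x => (Pi.single x (u x) : ι → F) y]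
    by_cases hy : u y = 0 <;> simp [support, Pi.single_apply, hy]
  rw [sumSingle, Finset.sum_apply, ← hsum]
  exact Fintype.sum_equiv support.equivFin.symm _ _ fun i => rfl

omit [Fintype ι] in
theorem sumSingle_fin_three_eq_zero_iff {z : Fin 3 → ι × Fˣ} :
    sumSingle z = 0 ↔
      (z 1).1 = (z 0).1 ∧ (z 2).1 = (z 0).1 ∧ ((z 0).2 : F) + (z 1).2 + (z 2).2 = 0 := by
  rw [sumSingle, Fin.sum_univ_three]
  refine ⟨fun h => ?_, fun ⟨h₁, h₂, hsum⟩ => ?_⟩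
  · have h₀ := congrFun h (z 0).1
    have h₁ := congrFun h (z 1).1
    have h₂ := congrFun h (z 2).1
    simp only [Pi.add_apply, Pi.single_apply, Pi.zero_apply] at h₀ h₁ h₂
    have := (z 0).2.ne_zero
    have := (z 1).2.ne_zero
    have := (z 2).2.ne_zero
    grind
  · rw [h₁, h₂, ← Pi.single_add, ← Pi.single_add, hsum, Pi.single_zero]

theorem card_sumSingle_fin_three_eq_zero [Fintype F] [DecidableEq F] :
    (#{z : Fin 3 → ι × Fˣ | sumSingle z = 0} : ℤ) =
      Fintype.card ι * (Fintype.card F - 1) * (Fintype.card F - 2) := by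
  have hcard : #{z : Fin 3 → ι × Fˣ | sumSingle z = 0} =
      #((univ : Finset ι) ×ˢ (univ : Finset Fˣ).offDiag) := by
    refine card_bij (fun z _ => ((z 0).1, ((z 0).2, -(z 1).2))) (fun z hz => ?_)
      (fun z hz z' hz' h => ?_) fun ⟨x, a, d⟩ had => ?_
    · have hz := (sumSingle_fin_three_eq_zero_iff.mp (mem_filter.mp hz).2).2.2
      simp only [mem_product, mem_univ, mem_offDiag, true_and]
      intro heq
      rw [heq, Units.val_neg, neg_add_cancel, zero_add] at hz
      exact (z 2).2.ne_zero hz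
    · obtain ⟨h₁, h₂, hsum⟩ := sumSingle_fin_three_eq_zero_iff.mp (mem_filter.mp hz).2
      obtain ⟨h₁', h₂', hsum'⟩ := sumSingle_fin_three_eq_zero_iff.mp (mem_filter.mp hz').2
      simp only [Prod.mk.injEq, neg_inj] at h
      obtain ⟨hx, ha, hb⟩ := h
      have hc : (z 2).2 = (z' 2).2 := by
        rw [ha, hb] at hsum
        exact Units.ext (add_left_cancel (hsum.trans hsum'.symm))
      funext i
      fin_cases i <;> refine Prod.ext ?_ ?_ <;> simp_all
    · have hne : a ≠ d := (mem_offDiag.mp (mem_product.mp had).2).2.2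
      have hsub : (d : F) - a ≠ 0 := sub_ne_zero.mpr fun h => hne (Units.ext h.symm)
      refine ⟨![(x, a), (x, -d), (x, Units.mk0 _ hsub)], ?_, by simp⟩
      simp [sumSingle_fin_three_eq_zero_iff, ← sub_eq_add_neg]
  have hunits : (Fintype.card Fˣ : ℤ) = Fintype.card F - 1 := by
    rw [Fintype.card_units, Nat.cast_sub Fintype.card_pos, Nat.cast_one]
  rw [hcard, card_product, offDiag_card, card_univ, card_univ, Nat.cast_mul,
    Nat.cast_sub (Nat.le_mul_self _), Nat.cast_mul, hunits]
  ring

theorem exists_hammingNorm_eq_three_iff [Fintype F] [DecidableEq F] {C : Submodule F (ι → F)}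
    (hthree : ∀ u ∈ dualCode (C : Set (ι → F)), u ≠ 0 → 3 ≤ hammingNorm u) :
    (∃ u ∈ dualCode (C : Set (ι → F)), hammingNorm u = 3) ↔
      ((weightDistribution (C : Set (ι → F))).map fun t =>
          krawtchouk₁ (Fintype.card F) (Fintype.card ι) t ^ 3).sum ≠
        Nat.card C * (Fintype.card ι * (Fintype.card F - 1) * (Fintype.card F - 2)) := by
  have hcard : (Nat.card C : ℤ) ≠ 0 := by exact_mod_cast Nat.card_pos.ne'
  have hsubset : ({z : Fin 3 → ι × Fˣ | sumSingle z = 0} : Finset _) ⊆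
      ({z | sumSingle z ∈ dualCode (C : Set (ι → F))} : Finset _) := by
    intro z hz
    simp only [mem_filter, mem_univ, true_and] at hz ⊢
    simp [hz, dualCode]
  rw [sum_krawtchouk₁_pow, ← card_sumSingle_fin_three_eq_zero, Ne, mul_right_inj' hcard,
    Nat.cast_inj]
  constructor
  · rintro ⟨u, hu, hnorm⟩ heq
    obtain ⟨z, hz⟩ := exists_sumSingle_eq hnorm
    have hmem : z ∈ ({z | sumSingle z = 0} : Finset (Fin 3 → ι × Fˣ)) := by
      rw [eq_of_subset_of_card_le hsubset heq.le, mem_filter, hz]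
      exact ⟨mem_univ _, hu⟩
    rw [← hz, (mem_filter.mp hmem).2, hammingNorm_zero] at hnorm
    omega
  · intro hne
    obtain ⟨z, hz, hz₀⟩ := exists_of_ssubset
      (hsubset.ssubset_of_ne fun h => hne (congrArg card h.symm))
    simp only [mem_filter, mem_univ, true_and] at hz hz₀
    exact ⟨_, hz, (hammingNorm_sumSingle_le z).antisymm (hthree _ hz hz₀)⟩

theorem three_le_hammingNorm_of_mem_dualCode [DecidableEq F] {C : Set (ι → F)} (hone : 1 ∈ C)
    (hsep : ∀ x y, x ≠ y → ∃ c ∈ C, c x ≠ c y) {u : ι → F} (hu : u ∈ dualCode C) (hne : u ≠ 0) :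
    3 ≤ hammingNorm u := by
  have hsum : ∑ x with u x ≠ 0, u x = 0 := by
    rw [sum_filter_ne_zero]
    simpa using hu 1 hone
  have hdot {c : ι → F} (hc : c ∈ C) : ∑ x with u x ≠ 0, u x * c x = 0 :=
    (sum_filter_of_ne fun x _ h => left_ne_zero_of_mul h).trans (hu c hc)
  by_contra! hlt
  have hpos : 0 < hammingNorm u := hammingNorm_pos_iff.mpr hne
  rcases (by omega : hammingNorm u = 1 ∨ hammingNorm u = 2) with h | h
  · obtain ⟨x, hx⟩ := card_eq_one.mp h
    have hux : u x ≠ 0 := (mem_filter.mp (hx.ge (mem_singleton_self x))).2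
    rw [hx, sum_singleton] at hsum
    exact hux hsum
  · obtain ⟨x, y, hxy, hsupport⟩ := card_eq_two.mp h
    have hux : u x ≠ 0 := (mem_filter.mp (hsupport.ge (mem_insert_self x _))).2
    obtain ⟨c, hc, hcxy⟩ := hsep x y hxy
    have hdotc := hdot hc
    rw [hsupport, sum_pair hxy] at hsum hdotc
    refine mul_ne_zero hux (sub_ne_zero.mpr hcxy) ?_
    linear_combination hdotc - c y * hsum

theorem coe_dualCode_eq_orthogonal (C : Submodule F (ι → F)) :
    dualCode (C : Set (ι → F)) =
      (LinearMap.BilinForm.orthogonal (dotProductBilin F F) C : Set (ι → F)) := by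
  ext u
  exact forall₂_congr fun v _ => Iff.of_eq (congrArg (· = 0) (dotProduct_comm u v))

theorem natCard_dualCode [Finite F] (C : Submodule F (ι → F)) :
    Nat.card (dualCode (C : Set (ι → F))) =
      Nat.card F ^ (Fintype.card ι - Module.finrank F C) := by
  have hnondegenerate : (dotProductBilin F F : LinearMap.BilinForm F (ι → F)).Nondegenerate :=
    ⟨fun u hu => dotProduct_eq_zero_iff.mp hu,
      fun u hu => dotProduct_eq_zero_iff.mp fun v => (dotProduct_comm u v).trans (hu v)⟩
  rw [coe_dualCode_eq_orthogonal, ← Module.finrank_pi F,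
    ← LinearMap.BilinForm.finrank_orthogonal hnondegenerate]
  exact Module.natCard_eq_pow_finrank

theorem exists_mem_dualCode_hammingNorm_le [Finite F] [DecidableEq F] {C : Submodule F (ι → F)}
    {T : Finset ι} {c : ι → F} (hc : c ∈ C) (hne : c ≠ 0) (hT : ∀ x ∈ T, c x = 0)
    (hrank : Module.finrank F C ≤ #T) :
    ∃ u ∈ dualCode (C : Set (ι → F)), u ≠ 0 ∧ hammingNorm u ≤ #T := by
  let restrict : (ι → F) →ₗ[F] T → F := LinearMap.funLeft F F Subtype.val
  have hker : 0 < Module.finrank F (LinearMap.ker (restrict.domRestrict C)) := by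
    refine Nat.pos_of_ne_zero fun hzero => hne ?_
    have hmem : ⟨c, hc⟩ ∈ LinearMap.ker (restrict.domRestrict C) := funext fun x => hT x x.2
    rw [Submodule.finrank_eq_zero.mp hzero, Submodule.mem_bot] at hmem
    exact congrArg Subtype.val hmem
  have hcard : 1 < Nat.card (dualCode (C.map restrict : Set (T → F))) := by
    have := LinearMap.finrank_range_add_finrank_ker (restrict.domRestrict C)
    rw [natCard_dualCode, Fintype.card_coe, ← LinearMap.range_domRestrict]
    exact Nat.one_lt_pow (by omega) Finite.one_lt_card
  obtain ⟨u, hu, hune⟩ := Set.exists_ne_of_one_lt_ncard hcard 0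
  refine ⟨fun x => if h : x ∈ T then u ⟨x, h⟩ else 0, fun v hv => ?_, fun h => hune ?_, ?_⟩
  · refine Eq.trans ?_ (hu _ (Submodule.mem_map_of_mem hv))
    rw [← sum_subset (subset_univ T) fun x _ hx => by simp [hx], ← sum_coe_sort T]
    exact sum_congr rfl fun x _ => by simp [restrict, LinearMap.funLeft_apply]
  · exact funext fun x => by simpa using congrFun h x
  · refine card_le_card fun x hx => ?_
    by_contra h
    simp [h] at hx

theorem sum_comp_eq_zero_of_forall_hammingNorm_eq_zero [DecidableEq F] {C : Submodule F (ι → F)}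
    (hone : 1 ∈ C) (hnorm : ∀ c ∈ C, (hammingNorm c : F) = 0) {c : ι → F} (hc : c ∈ C)
    (g : F → F) : ∑ x, g (c x) = 0 := by
  have hlength : (Fintype.card ι : F) = 0 := by simpa [hammingNorm] using hnorm 1 hone
  have hfibre (y : F) : (#{x | c x = y} : F) = 0 := by
    have hmem : c - y • 1 ∈ C := C.sub_mem hc (C.smul_mem y hone)
    have hzeros := congrArg (Nat.cast (R := F)) (hammingNorm_add_card_zeros (c - y • 1))
    simpa [hnorm _ hmem, hlength, sub_eq_zero] using hzeros
  rw [← sum_fiberwise_of_maps_to (g := c) (t := univ.image c) fun x _ =>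
    mem_image_of_mem c (mem_univ x)]
  refine sum_eq_zero fun y _ => ?_
  rw [sum_congr rfl fun x hx => congrArg g (mem_filter.mp hx).2, sum_const, nsmul_eq_mul, hfibre,
    zero_mul]

theorem subset_dualCode_of_forall_hammingNorm_eq_zero [DecidableEq F] (htwo : (2 : F) ≠ 0)
    {C : Submodule F (ι → F)} (hone : 1 ∈ C) (hnorm : ∀ c ∈ C, (hammingNorm c : F) = 0) :
    (C : Set (ι → F)) ⊆ dualCode C := by
  intro u hu v hv
  have hsq {c : ι → F} (hc : c ∈ C) : ∑ x, c x ^ 2 = 0 :=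
    sum_comp_eq_zero_of_forall_hammingNorm_eq_zero hone hnorm hc (· ^ 2)
  refine (mul_eq_zero.mp ?_).resolve_left htwo
  rw [mul_sum, ← sub_eq_zero.mpr ((hsq (C.add_mem hu hv)).trans (hsq hu).symm), ← sub_zero (_ - _),
    ← hsq hv, ← sum_sub_distrib, ← sum_sub_distrib]
  exact sum_congr rfl fun x _ => by rw [Pi.add_apply]; ring

end Codes

section Characters

open Polynomial in
theorem aeval_eq_zero_of_isPrimitiveRoot {K : Type*} [Field K] [CharZero K] {n : ℕ} (hn : 0 < n)
    {μ ν : K} (hμ : IsPrimitiveRoot μ n) (hν : IsPrimitiveRoot ν n) {P : ℤ[X]}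
    (h : aeval μ P = 0) : aeval ν P = 0 := by
  have hdvd : minpoly ℤ ν ∣ P := by
    rw [← cyclotomic_eq_minpoly hν hn, cyclotomic_eq_minpoly hμ hn]
    exact minpoly.isIntegrallyClosed_dvd (hμ.isIntegral hn) h
  obtain ⟨Q, rfl⟩ := hdvd
  rw [map_mul, minpoly.aeval, zero_mul]

/-- The quadratic character of a finite field with values in the complex numbers. -/
def complexQuadraticChar (F : Type*) [Field F] [Fintype F] [DecidableEq F] : MulChar F ℂ :=
  (quadraticChar F).ringHomComp (Int.castRingHom ℂ)

section FiniteField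

variable {F : Type*} [Field F] [Fintype F] [DecidableEq F]

theorem complexQuadraticChar_apply (a : F) : complexQuadraticChar F a = quadraticChar F a := rfl

theorem complexQuadraticChar_isQuadratic : (complexQuadraticChar F).IsQuadratic :=
  (quadraticChar_isQuadratic F).comp _

theorem complexQuadraticChar_ne_one (hF : ringChar F ≠ 2) : complexQuadraticChar F ≠ 1 :=
  (MulChar.ringHomComp_ne_one_iff (RingHom.injective_int _)).mpr (quadraticChar_ne_one hF)

theorem gaussSum_complexQuadraticChar_mulShift (hF : ringChar F ≠ 2) (ψ : AddChar F ℂ) (a : F) :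
    gaussSum (complexQuadraticChar F) (ψ.mulShift a) =
      complexQuadraticChar F a * gaussSum (complexQuadraticChar F) ψ := by
  by_cases ha : a = 0
  · have hsum := MulChar.sum_eq_zero_of_ne_one (complexQuadraticChar_ne_one hF)
    simp [ha, gaussSum, hsum, MulChar.map_zero (complexQuadraticChar F)]
  · have hshift := gaussSum_mulShift_eq (complexQuadraticChar F) ψ (Units.mk0 a ha)
    rwa [complexQuadraticChar_isQuadratic.inv] at hshift

theorem sum_units_complexQuadraticChar_mul (hF : ringChar F ≠ 2) (ψ : AddChar F ℂ) (a : F) :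
    ∑ y : Fˣ, complexQuadraticChar F y * ψ (y * a) =
      complexQuadraticChar F a * gaussSum (complexQuadraticChar F) ψ := by
  rw [← gaussSum_complexQuadraticChar_mulShift hF, gaussSum,
    ← sum_units_add_zero fun y => complexQuadraticChar F y * ψ.mulShift a y]
  simp [MulChar.map_zero (complexQuadraticChar F), mul_comm a]

theorem sum_comp_quadraticChar_eq_card_nsmul {M : Type*} [AddCommMonoid M] (g : ℤ → M) :
    ∑ a : F, g (quadraticChar F a) =
      g 0 + (#{a : F | quadraticChar F a = 1} • g 1 +
        #{a : F | quadraticChar F a = -1} • g (-1)) := by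
  have hmaps : ∀ a ∈ (univ : Finset F), quadraticChar F a ∈ ({0, 1, -1} : Finset ℤ) := by
    intro a _
    simpa only [mem_insert, mem_singleton] using quadraticChar_isQuadratic F a
  have hzero : #{a : F | quadraticChar F a = 0} = 1 := by
    simp only [quadraticChar_eq_zero_iff, filter_eq', mem_univ, if_true, card_singleton]
  have hfibre (i : ℤ) : ∑ a : F with quadraticChar F a = i, g (quadraticChar F a) =
      #{a : F | quadraticChar F a = i} • g i :=
    (sum_congr rfl fun a ha => congrArg g (mem_filter.mp ha).2).trans (sum_const _)
  rw [← sum_fiberwise_of_maps_to hmaps, sum_insert (by decide), sum_insert (by decide),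
    sum_singleton, hfibre, hfibre, hfibre, hzero, one_smul]

theorem sum_comp_quadraticChar (hF : ringChar F ≠ 2) {M : Type*} [AddCommMonoid M] (g : ℤ → M) :
    ∑ a : F, g (quadraticChar F a) = g 0 + ((Fintype.card F - 1) / 2) • (g 1 + g (-1)) := by
  have htotal := sum_comp_quadraticChar_eq_card_nsmul (F := F) fun _ => (1 : ℕ)
  have hbalance := sum_comp_quadraticChar_eq_card_nsmul (F := F) (id : ℤ → ℤ)
  have hsum := quadraticChar_sum_zero hF
  rw [sum_comp_quadraticChar_eq_card_nsmul]
  generalize #{a : F | quadraticChar F a = 1} = m at *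
  generalize #{a : F | quadraticChar F a = -1} = n at *
  simp only [id, hsum, sum_const, card_univ, smul_eq_mul, nsmul_eq_mul, mul_one] at htotal hbalance
  obtain rfl : n = m := by omega
  rw [← nsmul_add, show (Fintype.card F - 1) / 2 = n by omega]

end FiniteField

section ZMod

variable {p : ℕ} [Fact p.Prime]

theorem isPrimitiveRoot_zetapc : IsPrimitiveRoot (zetapc p) p :=
  Complex.isPrimitiveRoot_exp p (Fact.out : p.Prime).ne_zero

theorem zetapc_pow_val (v : ZMod p) : zetapc p ^ v.val = ZMod.stdAddChar v := by
  conv_rhs => rw [← ZMod.natCast_zmod_val v, ← Int.cast_natCast, ZMod.stdAddChar_coe]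
  rw [zetapc, ← Complex.exp_nat_mul, Int.cast_natCast, mul_div_assoc', mul_comm (v.val : ℂ)]

theorem pow_val_zetapc_pow_val (k v : ZMod p) :
    (zetapc p ^ k.val) ^ v.val = ZMod.stdAddChar (k * v) := by
  rw [← zetapc_pow_val, ZMod.val_mul, ← pow_mul, ← pow_mod_orderOf,
    ← isPrimitiveRoot_zetapc.eq_orderOf]

theorem ringChar_zmod_ne_two (hodd : Odd p) : ringChar (ZMod p) ≠ 2 := by
  rw [ZMod.ringChar_zmod_n]
  exact hodd.ne_two_of_dvd_nat dvd_rfl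

theorem qchar_eq_quadraticChar (a : ZMod p) : qchar (ZMod p) a = quadraticChar (ZMod p) a := by
  rw [quadraticChar_apply, quadraticCharFun, qchar]
  congr

theorem sqrtpstar_sq (hodd : Odd p) : sqrtpstar p ^ 2 = qchar (ZMod p) (-1) * p := by
  have hsqrt : ((Real.sqrt p : ℝ) : ℂ) ^ 2 = p := by
    rw [← Complex.ofReal_pow, Real.sq_sqrt p.cast_nonneg, Complex.ofReal_natCast]
  have hhalf : (p - 1) / 2 = p / 2 := by grind
  rw [sqrtpstar, mul_pow, hsqrt, ← pow_mul, mul_comm _ 2, pow_mul, Complex.I_sq,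
    qchar_eq_quadraticChar, quadraticChar_neg_one (ringChar_zmod_ne_two hodd), ZMod.card,
    ZMod.χ₄_eq_neg_one_pow (Nat.odd_iff.mp hodd), hhalf]
  rcases Nat.even_or_odd (p / 2) with h | h
  · simp [h.neg_one_pow, (h.pow_of_ne_zero two_ne_zero).neg_one_pow]
  · simp [h.neg_one_pow, h.pow.neg_one_pow]

omit [Fact p.Prime] in
theorem norm_sqrtpstar : ‖sqrtpstar p‖ = Real.sqrt p := by
  rw [sqrtpstar, norm_mul, norm_pow, Complex.norm_I, one_pow, one_mul, Complex.norm_real,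
    Real.norm_of_nonneg (Real.sqrt_nonneg _)]

theorem sqrtpstar_pow_of_even (hodd : Odd p) {e : ℕ} (he : Even e) :
    sqrtpstar p ^ e = qchar (ZMod p) (-1) ^ (e / 2) * p ^ (e / 2) := by
  rw [← mul_pow, ← sqrtpstar_sq hodd, ← pow_mul, Nat.two_mul_div_two_of_even he]

theorem exists_sqrtpstar_eq_mul_gaussSum (hodd : Odd p) :
    ∃ s : ℤ, (s = 1 ∨ s = -1) ∧
      sqrtpstar p = s * gaussSum (complexQuadraticChar (ZMod p)) ZMod.stdAddChar := by
  have hsq := gaussSum_sq (complexQuadraticChar_ne_one (ringChar_zmod_ne_two hodd))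
    complexQuadraticChar_isQuadratic (ZMod.isPrimitive_stdAddChar p)
  rw [ZMod.card, complexQuadraticChar_apply, ← qchar_eq_quadraticChar, ← sqrtpstar_sq hodd] at hsq
  rcases sq_eq_sq_iff_eq_or_eq_neg.mp hsq.symm with h | h
  · exact ⟨1, Or.inl rfl, by simpa using h⟩
  · exact ⟨-1, Or.inr rfl, by simpa using h⟩

open Polynomial in
theorem sum_stdAddChar_mul (hodd : Odd p) {ι : Type*} [Fintype ι] {g : ι → ZMod p} {e : ℕ} {ε : ℤ}
    {t : ZMod p}
    (h : ∑ x, ZMod.stdAddChar (g x) = (ε : ℂ) * sqrtpstar p ^ e * ZMod.stdAddChar t)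
    {k : ZMod p} (hk : k ≠ 0) :
    ∑ x, ZMod.stdAddChar (k * g x) =
      ε * sqrtpstar p ^ e * complexQuadraticChar (ZMod p) k ^ e * ZMod.stdAddChar (k * t) := by
  obtain ⟨s, -, hs⟩ := exists_sqrtpstar_eq_mul_gaussSum hodd
  have hp : p.Prime := Fact.out
  have hcoprime : k.val.Coprime p :=
    ((ZMod.isUnit_iff_coprime k.val p).mp (by simpa using hk.isUnit))
  let G : ℤ[X] := ∑ y : ZMod p, C (quadraticChar (ZMod p) y) * X ^ y.val
  let P : ℤ[X] := ∑ x, X ^ (g x).val - C ε * (C s * G) ^ e * X ^ t.val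
  have hP : aeval (zetapc p) P = 0 := by
    simp only [P, G, map_sub, map_sum, map_mul, map_pow, aeval_X, aeval_C, sub_eq_zero,
      zetapc_pow_val]
    simpa [hs, gaussSum, complexQuadraticChar_apply] using h
  have hconj := aeval_eq_zero_of_isPrimitiveRoot hp.pos isPrimitiveRoot_zetapc
    (isPrimitiveRoot_zetapc.pow_of_coprime _ hcoprime) hP
  have hgauss := gaussSum_complexQuadraticChar_mulShift (ringChar_zmod_ne_two hodd)
    ZMod.stdAddChar k
  simp only [gaussSum, AddChar.mulShift_apply, complexQuadraticChar_apply] at hgauss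
  simp only [P, G, map_sub, map_sum, map_mul, map_pow, aeval_X, eq_intCast, map_intCast,
    sub_eq_zero, pow_val_zetapc_pow_val, hgauss] at hconj
  rw [hconj, hs, gaussSum]
  simp only [complexQuadraticChar_apply]
  ring

end ZMod

end Characters

section RFCode

theorem krawtchouk₁_hammingNorm_linear_add_const {F V : Type*} [Field F] [Fintype F]
    [DecidableEq F] [AddCommGroup V] [Module F V] [Fintype V] {L : V →ₗ[F] F} (hL : L ≠ 0) (c : F) :
    krawtchouk₁ (Fintype.card F) (Fintype.card V) (hammingNorm fun x => L x + c) = 0 := by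
  have hψ := AddChar.FiniteField.primitiveChar_to_Complex_isPrimitive F
  set ψ := AddChar.FiniteField.primitiveChar_to_Complex F
  have hsum (y : Fˣ) : ∑ x, ψ (y * (L x + c)) = 0 := by
    have hne : (ψ.mulShift y).compAddMonoidHom L.toAddMonoidHom ≠ 1 := fun h =>
      hψ y.ne_zero (AddChar.compAddMonoidHom_injective_left _ (LinearMap.surjective hL) h)
    simp only [mul_add, AddChar.map_add_eq_mul, ← sum_mul]
    rw [mul_eq_zero_of_left]
    exact AddChar.sum_eq_zero_of_ne_one hne
  rw [← Int.cast_inj (α := ℂ), krawtchouk₁_hammingNorm hψ, sum_comm,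
    sum_eq_zero fun y _ => hsum y, Int.cast_zero]

theorem eq_of_krawtchouk₁_eq {p e : ℕ} (hp : p ≠ 0) (he : e ≠ 0) {t k : ℤ}
    (h : krawtchouk₁ p (p ^ e) t = p * k) : t = p ^ e - p ^ (e - 1) - k := by
  have hpow : (p : ℤ) ^ e = p * p ^ (e - 1) := (mul_pow_sub_one he _).symm
  refine mul_left_cancel₀ (Nat.cast_ne_zero.mpr hp) (a := (p : ℤ)) ?_
  rw [krawtchouk₁, Nat.cast_pow] at h
  linear_combination -h - hpow

theorem sum_eq_add_card_sub_one_nsmul {α M : Type*} [Fintype α] [AddCommMonoid M] {g : α → M}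
    {m : M} (i : α) (h : ∀ j, j ≠ i → g j = m) : ∑ j, g j = g i + (Fintype.card α - 1) • m := by
  rw [← add_sum_erase univ g (mem_univ i), sum_congr rfl fun j hj => h j (ne_of_mem_erase hj),
    sum_const, card_erase_of_mem (mem_univ i), card_univ]

variable {p e : ℕ} {Fq : Type*} [Field Fq] [Algebra (ZMod p) Fq] {f fstar : Fq → ZMod p} {ε : ℤ}

/-- `f : F_q → F_p`, where `q = p ^ e`, is a weakly regular bent function with sign `ε` and dual
`fstar`: the conditions on the Walsh transform in the definition of the class `RF`, with
`ZMod.stdAddChar v` for `ζ_p ^ v`. -/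
structure IsWeaklyRegularBent [NeZero p] [Fintype Fq] (e : ℕ) (f : Fq → ZMod p) (ε : ℤ)
    (fstar : Fq → ZMod p) : Prop where
  sign : ε = 1 ∨ ε = -1
  walsh : ∀ β : Fq, ∑ x, ZMod.stdAddChar (f x - Algebra.trace (ZMod p) Fq (β * x)) =
    (ε : ℂ) * sqrtpstar p ^ e * ZMod.stdAddChar (fstar β)

theorem IsRF.isWeaklyRegularBent [Fact p.Prime] [Fintype Fq] (h : IsRF p e Fq f ε fstar) :
    IsWeaklyRegularBent e f ε fstar where
  sign := h.sign
  walsh β := by simpa only [zetapc_pow_val] using h.walsh β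

/-- The linear map sending `(a, b, c)` to the codeword `a f(x) + Tr(b x) + c` of `C_f`. -/
def rfEncoder (f : Fq → ZMod p) : (ZMod p × Fq × ZMod p) →ₗ[ZMod p] (Fq → ZMod p) where
  toFun v x := v.1 * f x + Algebra.trace (ZMod p) Fq (v.2.1 * x) + v.2.2
  map_add' v w := by
    funext x
    simp only [Prod.fst_add, Prod.snd_add, add_mul, map_add, Pi.add_apply]
    ring
  map_smul' k v := by
    funext x
    simp only [Prod.smul_fst, Prod.smul_snd, smul_mul_assoc, map_smul, Pi.smul_apply, smul_eq_mul,
      RingHom.id_apply]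
    ring

theorem rfEncoder_apply (a c : ZMod p) (b x : Fq) :
    rfEncoder f (a, b, c) x = a * f x + Algebra.trace (ZMod p) Fq (b * x) + c := rfl

theorem one_mem_range_rfEncoder : 1 ∈ LinearMap.range (rfEncoder f) :=
  ⟨(0, 0, 1), funext fun x => by simp [rfEncoder_apply]⟩

theorem exists_trace_mul_ne_zero [Fact p.Prime] [Finite Fq] {b : Fq} (hb : b ≠ 0) :
    ∃ x, Algebra.trace (ZMod p) Fq (b * x) ≠ 0 := by
  by_contra! h
  exact hb ((traceForm_nondegenerate (ZMod p) Fq).1 b h)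

variable [Fintype Fq]

theorem range_rfEncoder : Set.range (rfEncoder f) = rfCode p Fq f := by
  ext w
  constructor
  · rintro ⟨⟨a, b, c⟩, rfl⟩
    exact ⟨a, c, b, fun x => rfl⟩
  · rintro ⟨a, c, b, hw⟩
    exact ⟨(a, b, c), funext fun x => (hw x).symm⟩

theorem coe_range_rfEncoder : (LinearMap.range (rfEncoder f) : Set (Fq → ZMod p)) = rfCode p Fq f :=
  (LinearMap.coe_range _).trans range_rfEncoder

variable [Fact p.Prime]

theorem three_le_hammingNorm_of_mem_dualCode_rfCode {u : Fq → ZMod p}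
    (hu : u ∈ dualCode (rfCode p Fq f)) (hne : u ≠ 0) : 3 ≤ hammingNorm u := by
  rw [← coe_range_rfEncoder] at hu
  refine three_le_hammingNorm_of_mem_dualCode one_mem_range_rfEncoder (fun x y hxy => ?_) hu hne
  obtain ⟨b, hb⟩ := exists_trace_mul_ne_zero (p := p) (sub_ne_zero.mpr hxy)
  refine ⟨_, ⟨(0, b, 0), rfl⟩, fun h => hb ?_⟩
  simpa [rfEncoder_apply, mul_comm _ b, mul_sub, sub_eq_zero] using h

theorem sum_hammingNorm_rfEncoder_zero_zero (hcard : Fintype.card Fq = p ^ e) :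
    ∑ c, ({(hammingNorm (rfEncoder f (0, 0, c)) : ℤ)} : Multiset ℤ) =
      {0} + (p - 1) • {(p : ℤ) ^ e} := by
  have hweight (c : ZMod p) (hc : c ≠ 0) :
      ({(hammingNorm (rfEncoder f (0, 0, c)) : ℤ)} : Multiset ℤ) = {(p : ℤ) ^ e} := by
    simp [rfEncoder_apply, hammingNorm, hc, hcard]
  rw [sum_eq_add_card_sub_one_nsmul 0 hweight, ZMod.card]
  simp [rfEncoder_apply, hammingNorm]

theorem hammingNorm_rfEncoder_zero (hcard : Fintype.card Fq = p ^ e) (he : e ≠ 0) {b : Fq}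
    (hb : b ≠ 0) (c : ZMod p) :
    (hammingNorm (rfEncoder f (0, b, c)) : ℤ) = p ^ e - p ^ (e - 1) := by
  let L : Fq →ₗ[ZMod p] ZMod p := Algebra.traceForm (ZMod p) Fq b
  have hL : L ≠ 0 := by
    obtain ⟨x, hx⟩ := exists_trace_mul_ne_zero (p := p) hb
    exact fun h => hx (LinearMap.congr_fun h x)
  have hcodeword : rfEncoder f (0, b, c) = fun x => L x + c := by
    funext x
    simp [rfEncoder_apply, L, Algebra.traceForm_apply]
  rw [hcodeword, ← sub_zero (_ - _)]
  refine eq_of_krawtchouk₁_eq (NeZero.ne p) he ?_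
  simpa [hcard] using krawtchouk₁_hammingNorm_linear_add_const hL c

namespace IsWeaklyRegularBent

variable (h : IsWeaklyRegularBent e f ε fstar) (hodd : Odd p)
include h hodd

theorem sum_stdAddChar_mul_rfEncoder {y a : ZMod p} (hy : y ≠ 0) (ha : a ≠ 0) (b : Fq)
    (c : ZMod p) : ∑ x, ZMod.stdAddChar (y * rfEncoder f (a, b, c) x) =
      ε * sqrtpstar p ^ e * complexQuadraticChar (ZMod p) (y * a) ^ e *
        ZMod.stdAddChar (y * (a * fstar (-(a⁻¹ • b)) + c)) := by
  have hcodeword (x : Fq) : y * rfEncoder f (a, b, c) x =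
      y * a * (f x - Algebra.trace (ZMod p) Fq (-(a⁻¹ • b) * x)) + y * c := by
    rw [rfEncoder_apply, neg_mul, smul_mul_assoc, map_neg, map_smul, smul_eq_mul]
    field_simp
    ring
  simp only [hcodeword, AddChar.map_add_eq_mul, ← sum_mul,
    sum_stdAddChar_mul hodd (h.walsh _) (mul_ne_zero hy ha)]
  rw [mul_assoc, ← AddChar.map_add_eq_mul, mul_add, mul_assoc y a]

theorem krawtchouk₁_hammingNorm_rfEncoder {a : ZMod p} (ha : a ≠ 0) (b : Fq) (c : ZMod p) :
    (krawtchouk₁ p (Fintype.card Fq) (hammingNorm (rfEncoder f (a, b, c))) : ℂ) =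
      ε * sqrtpstar p ^ e * ∑ y : (ZMod p)ˣ, complexQuadraticChar (ZMod p) (y * a) ^ e *
        ZMod.stdAddChar ((y : ZMod p) * (a * fstar (-(a⁻¹ • b)) + c)) := by
  have hsum := krawtchouk₁_hammingNorm (ZMod.isPrimitive_stdAddChar p) (rfEncoder f (a, b, c))
  rw [ZMod.card] at hsum
  rw [hsum, sum_comm, mul_sum]
  refine sum_congr rfl fun y _ => ?_
  rw [h.sum_stdAddChar_mul_rfEncoder hodd y.ne_zero ha, mul_assoc (_ * _)]

theorem hammingNorm_rfEncoder_of_even (hcard : Fintype.card Fq = p ^ e) (he : e ≠ 0)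
    (heven : Even e) {a : ZMod p} (ha : a ≠ 0) (b : Fq) (c : ZMod p) :
    (hammingNorm (rfEncoder f (a, b, c)) : ℤ) = p ^ e - p ^ (e - 1) -
      ε * qchar (ZMod p) (-1) ^ (e / 2) * p ^ (e / 2 - 1) *
        ((if a * fstar (-(a⁻¹ • b)) + c = 0 then (p : ℤ) else 0) - 1) := by
  refine eq_of_krawtchouk₁_eq (NeZero.ne p) he ?_
  have hchar (y : (ZMod p)ˣ) : complexQuadraticChar (ZMod p) (y * a) ^ e = 1 := by
    rw [← MulChar.pow_apply' _ he, complexQuadraticChar_isQuadratic.pow_even heven,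
      MulChar.one_apply (y.isUnit.mul ha.isUnit)]
  have hpow : (p : ℂ) ^ (e / 2) = p * p ^ (e / 2 - 1) :=
    (mul_pow_sub_one (by grind) _).symm
  have hsum := h.krawtchouk₁_hammingNorm_rfEncoder hodd ha b c
  simp only [hchar, one_mul, sum_units_addChar (ZMod.isPrimitive_stdAddChar p), ZMod.card,
    sqrtpstar_pow_of_even hodd heven, hcard, hpow] at hsum
  rw [← Int.cast_inj (α := ℂ), hsum]
  push_cast
  ring

theorem exists_hammingNorm_rfEncoder_of_odd (hcard : Fintype.card Fq = p ^ e) (hodd' : Odd e) :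
    ∃ s : ℤ, (s = 1 ∨ s = -1) ∧ ∀ a : ZMod p, a ≠ 0 → ∀ (b : Fq) (c : ZMod p),
      (hammingNorm (rfEncoder f (a, b, c)) : ℤ) = p ^ e - p ^ (e - 1) -
        s * (ε * qchar (ZMod p) (-1) ^ ((e + 1) / 2) * p ^ ((e - 1) / 2)) *
          quadraticChar (ZMod p) (a * (a * fstar (-(a⁻¹ • b)) + c)) := by
  obtain ⟨s, hs, hsqrt⟩ := exists_sqrtpstar_eq_mul_gaussSum hodd
  refine ⟨s, hs, fun a ha b c => eq_of_krawtchouk₁_eq (NeZero.ne p)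
    hodd'.pos.ne' ?_⟩
  have hchar (y : (ZMod p)ˣ) : complexQuadraticChar (ZMod p) (y * a) ^ e =
      complexQuadraticChar (ZMod p) y * complexQuadraticChar (ZMod p) a := by
    rw [← MulChar.pow_apply' _ hodd'.pos.ne', complexQuadraticChar_isQuadratic.pow_odd hodd',
      map_mul]
  have hgauss : gaussSum (complexQuadraticChar (ZMod p)) ZMod.stdAddChar = s * sqrtpstar p := by
    rcases hs with rfl | rfl <;> simp [hsqrt]
  have hpow : sqrtpstar p ^ e * sqrtpstar p =
      qchar (ZMod p) (-1) ^ ((e + 1) / 2) * (p * p ^ ((e - 1) / 2)) := by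
    rw [← pow_succ, sqrtpstar_pow_of_even hodd hodd'.add_one, ← pow_succ' (p : ℂ),
      show (e - 1) / 2 + 1 = (e + 1) / 2 by grind]
  have hsum := h.krawtchouk₁_hammingNorm_rfEncoder hodd ha b c
  simp only [hchar, mul_right_comm _ (complexQuadraticChar (ZMod p) a), ← sum_mul,
    sum_units_complexQuadraticChar_mul (ringChar_zmod_ne_two hodd), hgauss,
    hcard] at hsum
  rw [← Int.cast_inj (α := ℂ), hsum, map_mul]
  push_cast [complexQuadraticChar_apply]
  linear_combination ε * s * quadraticChar (ZMod p) a *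
    quadraticChar (ZMod p) (a * fstar (-(a⁻¹ • b)) + c) * hpow

theorem rfEncoder_ne_zero (hcard : Fintype.card Fq = p ^ e) (he : e ≠ 0) {a : ZMod p} (ha : a ≠ 0)
    (b : Fq) (c : ZMod p) : rfEncoder f (a, b, c) ≠ 0 := by
  intro hzero
  have hsum := h.sum_stdAddChar_mul_rfEncoder hodd one_ne_zero ha b c
  have hε : ‖(ε : ℂ)‖ = 1 := by rcases h.sign with rfl | rfl <;> simp
  have hχ : ‖complexQuadraticChar (ZMod p) a‖ = 1 := by
    rcases quadraticChar_dichotomy ha with h | h <;> simp [complexQuadraticChar_apply, h]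
  replace hsum := congrArg norm hsum
  simp only [hzero, Pi.zero_apply, mul_zero, AddChar.map_zero_eq_one, sum_const, card_univ, hcard,
    nsmul_eq_mul, mul_one, one_mul, norm_mul, norm_pow, hε, hχ, one_pow, AddChar.norm_apply,
    norm_sqrtpstar, Complex.norm_natCast, Nat.cast_pow] at hsum
  have hp : 1 < Real.sqrt p :=
    Real.lt_sqrt_of_sq_lt (by simpa using (Fact.out : p.Prime).one_lt)
  have hlt : Real.sqrt p < p := by
    nlinarith [Real.sq_sqrt p.cast_nonneg]
  exact (pow_lt_pow_left₀ hlt (Real.sqrt_nonneg _) he).ne' hsum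

theorem rfEncoder_injective (hcard : Fintype.card Fq = p ^ e) (he : e ≠ 0) :
    Function.Injective (rfEncoder f) := by
  refine (injective_iff_map_eq_zero _).mpr fun ⟨a, b, c⟩ hzero => ?_
  obtain rfl : a = 0 := by_contra fun ha => h.rfEncoder_ne_zero hodd hcard he ha b c hzero
  obtain rfl : c = 0 := by simpa [rfEncoder_apply] using congrFun hzero 0
  obtain rfl : b = 0 := by
    by_contra hb
    obtain ⟨x, hx⟩ := exists_trace_mul_ne_zero (p := p) hb
    exact hx (by simpa [rfEncoder_apply] using congrFun hzero x)
  rfl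

theorem finrank_range_rfEncoder (hcard : Fintype.card Fq = p ^ e) (he : e ≠ 0) :
    Module.finrank (ZMod p) (LinearMap.range (rfEncoder f)) = e + 2 := by
  have hdim : Module.finrank (ZMod p) Fq = e := by
    refine Nat.pow_right_injective (Fact.out : p.Prime).two_le ?_
    simpa only [Nat.card_eq_fintype_card, hcard, ZMod.card] using
      (Module.natCard_eq_pow_finrank (K := ZMod p) (V := Fq)).symm
  rw [LinearMap.finrank_range_of_inj (h.rfEncoder_injective hodd hcard he), Module.finrank_prod,
    Module.finrank_prod, Module.finrank_self, hdim]
  ring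

theorem natCard_rfCode (hcard : Fintype.card Fq = p ^ e) (he : e ≠ 0) :
    Nat.card (rfCode p Fq f) = p ^ (e + 2) := by
  have hrange := Module.natCard_eq_pow_finrank (K := ZMod p) (V := LinearMap.range (rfEncoder f))
  rwa [h.finrank_range_rfEncoder hodd hcard he, Nat.card_zmod, ← SetLike.coe_sort_coe,
    coe_range_rfEncoder] at hrange

theorem natCard_dualCode_rfCode (hcard : Fintype.card Fq = p ^ e) (he : e ≠ 0) :
    Nat.card (dualCode (rfCode p Fq f)) = p ^ (p ^ e - e - 2) := by
  rw [← coe_range_rfEncoder, natCard_dualCode, h.finrank_range_rfEncoder hodd hcard he, hcard,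
    Nat.card_zmod, Nat.sub_sub]

theorem weightDistribution_rfCode (hcard : Fintype.card Fq = p ^ e) (he : e ≠ 0) {S : Multiset ℤ}
    (hS : ∀ a : ZMod p, a ≠ 0 → ∀ b,
      ∑ c, ({(hammingNorm (rfEncoder f (a, b, c)) : ℤ)} : Multiset ℤ) = S) :
    weightDistribution (rfCode p Fq f) = {0} + (p - 1) • {(p : ℤ) ^ e} +
      (p * (p ^ e - 1)) • {(p : ℤ) ^ e - p ^ (e - 1)} + ((p - 1) * p ^ e) • S := by
  have hquadratic (a : ZMod p) (ha : a ≠ 0) :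
      ∑ b, ∑ c, ({(hammingNorm (rfEncoder f (a, b, c)) : ℤ)} : Multiset ℤ) = p ^ e • S := by
    rw [sum_congr rfl fun b _ => hS a ha b, sum_const, card_univ, hcard]
  have hlinear (b : Fq) (hb : b ≠ 0) :
      ∑ c, ({(hammingNorm (rfEncoder f (0, b, c)) : ℤ)} : Multiset ℤ) =
        p • {(p : ℤ) ^ e - p ^ (e - 1)} := by
    simp only [hammingNorm_rfEncoder_zero hcard he hb, sum_const, card_univ, ZMod.card]
  rw [← range_rfEncoder, weightDistribution_range (h.rfEncoder_injective hodd hcard he),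
    Fintype.sum_prod_type, sum_congr rfl fun a _ => Fintype.sum_prod_type _,
    sum_eq_add_card_sub_one_nsmul 0 hquadratic, sum_eq_add_card_sub_one_nsmul 0 hlinear,
    sum_hammingNorm_rfEncoder_zero_zero hcard, hcard, ZMod.card, smul_smul, smul_smul,
    mul_comm (p ^ e - 1)]

theorem sum_hammingNorm_rfEncoder_of_even (hcard : Fintype.card Fq = p ^ e) (he : e ≠ 0)
    (heven : Even e) {a : ZMod p} (ha : a ≠ 0) (b : Fq) :
    ∑ c, ({(hammingNorm (rfEncoder f (a, b, c)) : ℤ)} : Multiset ℤ) =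
      {(p : ℤ) ^ e - p ^ (e - 1) -
        ε * qchar (ZMod p) (-1) ^ (e / 2) * (p - 1) * p ^ (e / 2 - 1)} +
      (p - 1) • {(p : ℤ) ^ e - p ^ (e - 1) +
        ε * qchar (ZMod p) (-1) ^ (e / 2) * p ^ (e / 2 - 1)} := by
  let weight (t : ZMod p) : ℤ := p ^ e - p ^ (e - 1) -
    ε * qchar (ZMod p) (-1) ^ (e / 2) * p ^ (e / 2 - 1) * ((if t = 0 then (p : ℤ) else 0) - 1)
  have hweight (t : ZMod p) (ht : t ≠ 0) : ({weight t} : Multiset ℤ) =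
      {(p : ℤ) ^ e - p ^ (e - 1) + ε * qchar (ZMod p) (-1) ^ (e / 2) * p ^ (e / 2 - 1)} := by
    simp [weight, ht]
  calc ∑ c, ({(hammingNorm (rfEncoder f (a, b, c)) : ℤ)} : Multiset ℤ)
      = ∑ c, {weight (a * fstar (-(a⁻¹ • b)) + c)} :=
        sum_congr rfl fun c _ => by rw [h.hammingNorm_rfEncoder_of_even hodd hcard he heven ha b c]
    _ = ∑ t, {weight t} := Equiv.sum_comp (Equiv.addLeft _) fun t => ({weight t} : Multiset ℤ)
    _ = _ := by
      rw [sum_eq_add_card_sub_one_nsmul 0 hweight, ZMod.card]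
      simp only [weight, if_true]
      congr 2
      ring

theorem sum_hammingNorm_rfEncoder_of_odd (hcard : Fintype.card Fq = p ^ e) (hodd' : Odd e)
    {a : ZMod p} (ha : a ≠ 0) (b : Fq) :
    ∑ c, ({(hammingNorm (rfEncoder f (a, b, c)) : ℤ)} : Multiset ℤ) =
      {(p : ℤ) ^ e - p ^ (e - 1)} + ((p - 1) / 2) •
        ({(p : ℤ) ^ e - p ^ (e - 1) -
            ε * qchar (ZMod p) (-1) ^ ((e + 1) / 2) * p ^ ((e - 1) / 2)} +
          {(p : ℤ) ^ e - p ^ (e - 1) +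
            ε * qchar (ZMod p) (-1) ^ ((e + 1) / 2) * p ^ ((e - 1) / 2)}) := by
  obtain ⟨s, hs, hnorm⟩ := h.exists_hammingNorm_rfEncoder_of_odd hodd hcard hodd'
  let weight (v : ℤ) : ℤ := p ^ e - p ^ (e - 1) -
    s * (ε * qchar (ZMod p) (-1) ^ ((e + 1) / 2) * p ^ ((e - 1) / 2)) * v
  calc ∑ c, ({(hammingNorm (rfEncoder f (a, b, c)) : ℤ)} : Multiset ℤ)
      = ∑ c, {weight (quadraticChar (ZMod p) (a * (a * fstar (-(a⁻¹ • b)) + c)))} :=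
        sum_congr rfl fun c _ => by rw [hnorm a ha b c]
    _ = ∑ u, {weight (quadraticChar (ZMod p) u)} :=
        Equiv.sum_comp ((Equiv.addLeft _).trans (Equiv.mulLeft₀ a ha))
          fun u => ({weight (quadraticChar (ZMod p) u)} : Multiset ℤ)
    _ = {weight 0} + ((p - 1) / 2) • ({weight 1} + {weight (-1)}) := by
      rw [sum_comp_quadraticChar (ringChar_zmod_ne_two hodd) fun v => ({weight v} : Multiset ℤ),
        ZMod.card]
    _ = _ := by
      rcases hs with rfl | rfl
      · simp [weight]
      · rw [add_comm ({weight 1} : Multiset ℤ)]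
        simp [weight, sub_eq_add_neg]

theorem weightDistribution_rfCode_of_even (hcard : Fintype.card Fq = p ^ e) (he : e ≠ 0)
    (heven : Even e) : weightDistribution (rfCode p Fq f) =
      Multiset.replicate 1 (0 : ℤ)
        + Multiset.replicate ((p - 1) * p ^ e)
            ((p : ℤ) ^ e - (p : ℤ) ^ (e - 1)
              - ε * qchar (ZMod p) (-1) ^ (e / 2) * ((p : ℤ) - 1) * (p : ℤ) ^ (e / 2 - 1))
        + Multiset.replicate ((p - 1) ^ 2 * p ^ e)
            ((p : ℤ) ^ e - (p : ℤ) ^ (e - 1)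
              + ε * qchar (ZMod p) (-1) ^ (e / 2) * (p : ℤ) ^ (e / 2 - 1))
        + Multiset.replicate (p * (p ^ e - 1)) ((p : ℤ) ^ e - (p : ℤ) ^ (e - 1))
        + Multiset.replicate (p - 1) ((p : ℤ) ^ e) := by
  rw [h.weightDistribution_rfCode hodd hcard he fun a ha b =>
    h.sum_hammingNorm_rfEncoder_of_even hodd hcard he heven ha b]
  simp only [← Multiset.nsmul_singleton, one_smul]
  module

theorem weightDistribution_rfCode_of_odd (hcard : Fintype.card Fq = p ^ e) (hodd' : Odd e) :
    weightDistribution (rfCode p Fq f) =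
      Multiset.replicate 1 (0 : ℤ)
        + Multiset.replicate ((p - 1) ^ 2 * p ^ e / 2)
            ((p : ℤ) ^ e - (p : ℤ) ^ (e - 1)
              - ε * qchar (ZMod p) (-1) ^ ((e + 1) / 2) * (p : ℤ) ^ ((e - 1) / 2))
        + Multiset.replicate ((p - 1) ^ 2 * p ^ e / 2)
            ((p : ℤ) ^ e - (p : ℤ) ^ (e - 1)
              + ε * qchar (ZMod p) (-1) ^ ((e + 1) / 2) * (p : ℤ) ^ ((e - 1) / 2))
        + Multiset.replicate (2 * p ^ (e + 1) - p ^ e - p)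
            ((p : ℤ) ^ e - (p : ℤ) ^ (e - 1))
        + Multiset.replicate (p - 1) ((p : ℤ) ^ e) := by
  have hhalf : (p - 1) ^ 2 * p ^ e / 2 = (p - 1) * p ^ e * ((p - 1) / 2) := by
    rw [← Nat.mul_div_assoc _ (Nat.Odd.sub_odd hodd odd_one).two_dvd]
    ring_nf
  have hlinear : 2 * p ^ (e + 1) - p ^ e - p = p * (p ^ e - 1) + (p - 1) * p ^ e := by
    have hle : p ≤ p * p ^ e := Nat.le_mul_of_pos_right _ (pow_pos (NeZero.pos p) e)
    have hle' : p ^ e ≤ p * p ^ e := Nat.le_mul_of_pos_left _ (NeZero.pos p)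
    rw [Nat.mul_sub_one, Nat.sub_one_mul, pow_succ']
    omega
  rw [h.weightDistribution_rfCode hodd hcard hodd'.pos.ne' fun a ha b =>
    h.sum_hammingNorm_rfEncoder_of_odd hodd hcard hodd' ha b, hhalf, hlinear]
  simp only [← Multiset.nsmul_singleton, one_smul]
  module

theorem intCast_eq_zero_of_mem_weightDistribution_rfCode (hcard : Fintype.card Fq = p ^ e)
    (he : 3 ≤ e) {t : ℤ} (ht : t ∈ weightDistribution (rfCode p Fq f)) : (t : ZMod p) = 0 := by
  have he₀ : e ≠ 0 := by omega
  have hpred : e - 1 ≠ 0 := by omega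
  rcases e.even_or_odd with heven | hodd'
  · have hexp : e / 2 - 1 ≠ 0 := by grind
    rw [h.weightDistribution_rfCode_of_even hodd hcard he₀ heven] at ht
    simp only [Multiset.mem_add, Multiset.mem_replicate] at ht
    rcases ht with (((⟨-, rfl⟩ | ⟨-, rfl⟩) | ⟨-, rfl⟩) | ⟨-, rfl⟩) | ⟨-, rfl⟩ <;>
      simp [zero_pow hexp, zero_pow he₀, zero_pow hpred]
  · have hexp : (e - 1) / 2 ≠ 0 := by omega
    rw [h.weightDistribution_rfCode_of_odd hodd hcard hodd'] at ht
    simp only [Multiset.mem_add, Multiset.mem_replicate] at ht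
    rcases ht with (((⟨-, rfl⟩ | ⟨-, rfl⟩) | ⟨-, rfl⟩) | ⟨-, rfl⟩) | ⟨-, rfl⟩ <;>
      simp [zero_pow hexp, zero_pow he₀, zero_pow hpred]

theorem rfCode_subset_dualCode (hcard : Fintype.card Fq = p ^ e) (he : 3 ≤ e) :
    rfCode p Fq f ⊆ dualCode (rfCode p Fq f) := by
  have htwo : (2 : ZMod p) ≠ 0 := Ring.two_ne_zero (ringChar_zmod_ne_two hodd)
  rw [← coe_range_rfEncoder]
  refine subset_dualCode_of_forall_hammingNorm_eq_zero htwo one_mem_range_rfEncoder fun w hw => ?_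
  rw [← SetLike.mem_coe, coe_range_rfEncoder] at hw
  exact_mod_cast h.intCast_eq_zero_of_mem_weightDistribution_rfCode hodd hcard he
    (mem_weightDistribution.mpr ⟨w, hw, rfl⟩)

omit hodd in
theorem sign_mul_qchar_pow (n : ℕ) :
    ε * qchar (ZMod p) (-1) ^ n = 1 ∨ ε * qchar (ZMod p) (-1) ^ n = -1 := by
  have hqchar : IsUnit (qchar (ZMod p) (-1)) := by
    rw [qchar_eq_quadraticChar]
    exact isUnit_one.neg.map _
  exact Int.isUnit_iff.mp ((Int.isUnit_iff.mpr h.sign).mul (hqchar.pow n))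

theorem sum_krawtchouk₁_pow_three_rfCode_of_even (hcard : Fintype.card Fq = p ^ e) (he : e ≠ 0)
    (heven : Even e) :
    ((weightDistribution (rfCode p Fq f)).map fun t => krawtchouk₁ p (p ^ e) t ^ 3).sum =
      p ^ (e + 2) * (p ^ e * (p - 1) * (p - 2)) +
        p ^ (2 * e + 2) * (p - 1) * (p - 2) *
          (p ^ (e / 2 - 1) + ε * qchar (ZMod p) (-1) ^ (e / 2)) *
          (p ^ (e / 2) - ε * qchar (ZMod p) (-1) ^ (e / 2)) := by
  rw [h.weightDistribution_rfCode_of_even hodd hcard he heven]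
  have hsign : (ε * qchar (ZMod p) (-1) ^ (e / 2)) ^ 2 = 1 :=
    Int.isUnit_sq (Int.isUnit_iff.mpr (h.sign_mul_qchar_pow _))
  obtain ⟨m, rfl⟩ : ∃ m, e = 2 * (m + 1) := ⟨e / 2 - 1, by grind⟩
  have hhalf : 2 * (m + 1) / 2 = m + 1 := by omega
  have hpred : 2 * (m + 1) - 1 = 2 * m + 1 := by omega
  simp only [Multiset.map_add, Multiset.map_replicate, Multiset.sum_add, Multiset.sum_replicate,
    nsmul_eq_mul, krawtchouk₁, hhalf, hpred, Nat.add_sub_cancel] at hsign ⊢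
  generalize ε * qchar (ZMod p) (-1) ^ (m + 1) = σ at *
  push_cast [Nat.cast_pred (NeZero.pos p)]
  linear_combination ((p : ℤ) ^ (2 * (2 * (m + 1)) + 2) * (p - 1) * (p - 2)) *
    ((p - 1) * p ^ m * σ + 1) * hsign

theorem sum_krawtchouk₁_pow_three_rfCode_of_odd (hcard : Fintype.card Fq = p ^ e) (hodd' : Odd e) :
    ((weightDistribution (rfCode p Fq f)).map fun t => krawtchouk₁ p (p ^ e) t ^ 3).sum =
      p ^ (e + 2) * (p ^ e * (p - 1) * (p - 2)) +
        p ^ (2 * e + 1) * (p - 1) * (p - 2) * (p ^ e - p) := by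
  rw [h.weightDistribution_rfCode_of_odd hodd hcard hodd']
  obtain ⟨m, rfl⟩ := hodd'
  simp only [Multiset.map_add, Multiset.map_replicate, Multiset.sum_add, Multiset.sum_replicate,
    nsmul_eq_mul, krawtchouk₁, Nat.add_sub_cancel]
  push_cast [Nat.cast_pred (NeZero.pos p)]
  ring

theorem exists_mem_dualCode_rfCode_hammingNorm_eq_three_iff (hcard : Fintype.card Fq = p ^ e)
    (he : e ≠ 0) : (∃ u ∈ dualCode (rfCode p Fq f), hammingNorm u = 3) ↔
      ((weightDistribution (rfCode p Fq f)).map fun t => krawtchouk₁ p (p ^ e) t ^ 3).sum ≠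
        p ^ (e + 2) * (p ^ e * (p - 1) * (p - 2)) := by
  have hiff := exists_hammingNorm_eq_three_iff (C := LinearMap.range (rfEncoder f)) fun u hu hne =>
    three_le_hammingNorm_of_mem_dualCode_rfCode (coe_range_rfEncoder (f := f) ▸ hu) hne
  rw [← SetLike.coe_sort_coe, coe_range_rfEncoder, h.natCard_rfCode hodd hcard he, ZMod.card,
    hcard] at hiff
  exact_mod_cast hiff

theorem exists_mem_dualCode_rfCode_hammingNorm_eq_three (hcard : Fintype.card Fq = p ^ e)
    (he : 2 ≤ e) (hgeneric : ¬(e = 2 ∧ ε * qchar (ZMod p) (-1) = -1)) :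
    ∃ u ∈ dualCode (rfCode p Fq f), hammingNorm u = 3 := by
  have hp : (2 : ℤ) < p := by
    exact_mod_cast (Fact.out : p.Prime).two_le.lt_of_ne' (hodd.ne_two_of_dvd_nat dvd_rfl)
  have hp₀ : (p : ℤ) ≠ 0 := by omega
  have hp₁ : (p : ℤ) - 1 ≠ 0 := by omega
  have hp₂ : (p : ℤ) - 2 ≠ 0 := by omega
  rw [h.exists_mem_dualCode_rfCode_hammingNorm_eq_three_iff hodd hcard (by omega)]
  rcases e.even_or_odd with heven | hodd'
  · have hsmall : (p : ℤ) ^ (e / 2 - 1) + ε * qchar (ZMod p) (-1) ^ (e / 2) ≠ 0 := by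
      intro hzero
      by_cases htwo : e = 2
      · subst htwo
        exact hgeneric ⟨rfl, by simpa [add_comm (1 : ℤ), add_eq_zero_iff_eq_neg] using hzero⟩
      · have hlt : (1 : ℤ) < p ^ (e / 2 - 1) := one_lt_pow₀ (by omega) (by grind)
        rcases h.sign_mul_qchar_pow (e / 2) with hs | hs <;> omega
    have hlarge : (p : ℤ) ^ (e / 2) - ε * qchar (ZMod p) (-1) ^ (e / 2) ≠ 0 := by
      have hlt : (1 : ℤ) < p ^ (e / 2) := one_lt_pow₀ (by omega) (by omega)
      rcases h.sign_mul_qchar_pow (e / 2) with hs | hs <;> omega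
    rw [h.sum_krawtchouk₁_pow_three_rfCode_of_even hodd hcard (by omega) heven, Ne, add_eq_left]
    simp only [mul_eq_zero, hsmall, hlarge, hp₁, hp₂, pow_ne_zero _ hp₀, or_self, not_false_eq_true]
  · have hne : (p : ℤ) ^ e - p ≠ 0 :=
      sub_ne_zero.mpr (lt_self_pow₀ (by omega) (by omega)).ne'
    rw [h.sum_krawtchouk₁_pow_three_rfCode_of_odd hodd hcard hodd', Ne, add_eq_left]
    simp only [mul_eq_zero, hne, hp₁, hp₂, pow_ne_zero _ hp₀, or_self, not_false_eq_true]

theorem not_exists_mem_dualCode_rfCode_hammingNorm_eq_three (hcard : Fintype.card Fq = p ^ e)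
    (hexceptional : e = 2 ∧ ε * qchar (ZMod p) (-1) = -1) :
    ¬ ∃ u ∈ dualCode (rfCode p Fq f), hammingNorm u = 3 := by
  obtain ⟨rfl, hsign⟩ := hexceptional
  rw [h.exists_mem_dualCode_rfCode_hammingNorm_eq_three_iff hodd hcard two_ne_zero,
    h.sum_krawtchouk₁_pow_three_rfCode_of_even hodd hcard two_ne_zero even_two]
  simp [hsign]

theorem exists_mem_dualCode_rfCode_hammingNorm_le_four (hcard : Fintype.card Fq = p ^ e)
    (hexceptional : e = 2 ∧ ε * qchar (ZMod p) (-1) = -1) :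
    ∃ u ∈ dualCode (rfCode p Fq f), u ≠ 0 ∧ hammingNorm u ≤ 4 := by
  obtain ⟨rfl, hsign⟩ := hexceptional
  have hp : 2 < p :=
    (Fact.out : p.Prime).two_le.lt_of_ne' (hodd.ne_two_of_dvd_nat dvd_rfl)
  have hmem : (p : ℤ) ^ 2 - p - 1 ∈ weightDistribution (rfCode p Fq f) := by
    have hmultiplicity : (p - 1) ^ 2 * p ^ 2 ≠ 0 :=
      mul_ne_zero (pow_ne_zero _ (by omega)) (pow_ne_zero _ (by omega))
    rw [h.weightDistribution_rfCode_of_even hodd hcard two_ne_zero even_two]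
    simp only [Multiset.mem_add, Multiset.mem_replicate]
    refine Or.inl (Or.inl (Or.inr ⟨hmultiplicity, ?_⟩))
    simp [hsign, sub_eq_add_neg]
  obtain ⟨w, hw, hnorm⟩ := mem_weightDistribution.mp hmem
  have hzeros : #{x | w x = 0} = p + 1 := by
    have := hammingNorm_add_card_zeros w
    zify at this ⊢
    rw [hcard] at this
    push_cast at this
    linarith
  obtain ⟨T, hT, hcardT⟩ := exists_subset_card_eq (hzeros.symm ▸ (by omega : 4 ≤ p + 1))
  have hne : w ≠ 0 := by
    rintro rfl
    rw [hammingNorm_zero] at hnorm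
    have : (2 : ℤ) < p := by exact_mod_cast hp
    push_cast at hnorm
    nlinarith
  rw [← coe_range_rfEncoder, SetLike.mem_coe] at hw
  rw [← coe_range_rfEncoder, ← hcardT]
  refine exists_mem_dualCode_hammingNorm_le hw hne (fun x hx => (mem_filter.mp (hT hx)).2) ?_
  rw [h.finrank_range_rfEncoder hodd hcard two_ne_zero, hcardT]

theorem isMinDist_dualCode_rfCode_three (hcard : Fintype.card Fq = p ^ e) (he : 2 ≤ e)
    (hgeneric : ¬(e = 2 ∧ ε * qchar (ZMod p) (-1) = -1)) :
    IsMinDist (dualCode (rfCode p Fq f)) 3 := by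
  obtain ⟨u, hu, hnorm⟩ :=
    h.exists_mem_dualCode_rfCode_hammingNorm_eq_three hodd hcard he hgeneric
  have hne : u ≠ 0 := hammingNorm_ne_zero_iff.mp (by omega)
  exact isMinDist_iff.mpr
    ⟨⟨u, hu, hne, hnorm⟩, fun v hv hv₀ => three_le_hammingNorm_of_mem_dualCode_rfCode hv hv₀⟩

theorem isMinDist_dualCode_rfCode_four (hcard : Fintype.card Fq = p ^ e)
    (hexceptional : e = 2 ∧ ε * qchar (ZMod p) (-1) = -1) :
    IsMinDist (dualCode (rfCode p Fq f)) 4 := by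
  have hfour {v : Fq → ZMod p} (hv : v ∈ dualCode (rfCode p Fq f)) (hne : v ≠ 0) :
      4 ≤ hammingNorm v :=
    (three_le_hammingNorm_of_mem_dualCode_rfCode hv hne).lt_of_ne' fun hnorm =>
      h.not_exists_mem_dualCode_rfCode_hammingNorm_eq_three hodd hcard hexceptional ⟨v, hv, hnorm⟩
  obtain ⟨u, hu, hne, hle⟩ :=
    h.exists_mem_dualCode_rfCode_hammingNorm_le_four hodd hcard hexceptional
  exact isMinDist_iff.mpr ⟨⟨u, hu, hne, hle.antisymm (hfour hu hne)⟩, fun v hv => hfour hv⟩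

end IsWeaklyRegularBent

end RFCode

theorem stmt15_general {p e : ℕ} [Fact p.Prime] (hodd : Odd p) (he : 2 ≤ e)
    {Fq : Type*} [Field Fq] [Fintype Fq] [Algebra (ZMod p) Fq] (hcard : Fintype.card Fq = p ^ e)
    {f : Fq → ZMod p} {ε : ℤ} {fstar : Fq → ZMod p} (h : IsWeaklyRegularBent e f ε fstar) :
    Nat.card (rfCode p Fq f) = p ^ (e + 2) ∧
    (Even e → weightDistribution (rfCode p Fq f) =
      Multiset.replicate 1 (0 : ℤ)
        + Multiset.replicate ((p - 1) * p ^ e)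
            ((p : ℤ) ^ e - (p : ℤ) ^ (e - 1)
              - ε * qchar (ZMod p) (-1) ^ (e / 2) * ((p : ℤ) - 1) * (p : ℤ) ^ (e / 2 - 1))
        + Multiset.replicate ((p - 1) ^ 2 * p ^ e)
            ((p : ℤ) ^ e - (p : ℤ) ^ (e - 1)
              + ε * qchar (ZMod p) (-1) ^ (e / 2) * (p : ℤ) ^ (e / 2 - 1))
        + Multiset.replicate (p * (p ^ e - 1)) ((p : ℤ) ^ e - (p : ℤ) ^ (e - 1))
        + Multiset.replicate (p - 1) ((p : ℤ) ^ e)) ∧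
    (Odd e → weightDistribution (rfCode p Fq f) =
      Multiset.replicate 1 (0 : ℤ)
        + Multiset.replicate ((p - 1) ^ 2 * p ^ e / 2)
            ((p : ℤ) ^ e - (p : ℤ) ^ (e - 1)
              - ε * qchar (ZMod p) (-1) ^ ((e + 1) / 2) * (p : ℤ) ^ ((e - 1) / 2))
        + Multiset.replicate ((p - 1) ^ 2 * p ^ e / 2)
            ((p : ℤ) ^ e - (p : ℤ) ^ (e - 1)
              + ε * qchar (ZMod p) (-1) ^ ((e + 1) / 2) * (p : ℤ) ^ ((e - 1) / 2))
        + Multiset.replicate (2 * p ^ (e + 1) - p ^ e - p)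
            ((p : ℤ) ^ e - (p : ℤ) ^ (e - 1))
        + Multiset.replicate (p - 1) ((p : ℤ) ^ e)) ∧
    (3 ≤ e → rfCode p Fq f ⊆ dualCode (rfCode p Fq f)) ∧
    Nat.card (dualCode (rfCode p Fq f)) = p ^ (p ^ e - e - 2) ∧
    (e = 2 ∧ ε * qchar (ZMod p) (-1) = -1 → IsMinDist (dualCode (rfCode p Fq f)) 4) ∧
    (¬(e = 2 ∧ ε * qchar (ZMod p) (-1) = -1) → IsMinDist (dualCode (rfCode p Fq f)) 3) :=
  have he₀ : e ≠ 0 := by omega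
  ⟨h.natCard_rfCode hodd hcard he₀,
    h.weightDistribution_rfCode_of_even hodd hcard he₀,
    h.weightDistribution_rfCode_of_odd hodd hcard,
    h.rfCode_subset_dualCode hodd hcard,
    h.natCard_dualCode_rfCode hodd hcard he₀,
    h.isMinDist_dualCode_rfCode_four hodd hcard,
    h.isMinDist_dualCode_rfCode_three hodd hcard he⟩

theorem stmt15 (p e q : ℕ) [Fact p.Prime] (hodd : Odd p) (he : 2 ≤ e) (hq : q = p ^ e)
    (Fq : Type) [Field Fq] [Fintype Fq] [Algebra (ZMod p) Fq]
    (hcq : Fintype.card Fq = q)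
    (f : Fq → ZMod p) (ε : ℤ) (fstar : Fq → ZMod p) (hRF : IsRF p e Fq f ε fstar)
    (C : Set (Fq → ZMod p)) (hC : C = rfCode p Fq f) :
    -- length `p^e`
    Fintype.card Fq = p ^ e ∧
    -- dimension `e + 2`
    Nat.card C = p ^ (e + 2) ∧
    -- weight distribution, `e` even, with `σ = ε η₀(-1)^{e/2}`
    (Even e →
      (C.toFinset.val.map fun c => (hammingNorm c : ℤ))
        = Multiset.replicate 1 (0 : ℤ)
          + Multiset.replicate ((p - 1) * p ^ e)
              ((p : ℤ) ^ e - (p : ℤ) ^ (e - 1)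
                - ε * qchar (ZMod p) (-1) ^ (e / 2) * ((p : ℤ) - 1) * (p : ℤ) ^ (e / 2 - 1))
          + Multiset.replicate ((p - 1) ^ 2 * p ^ e)
              ((p : ℤ) ^ e - (p : ℤ) ^ (e - 1)
                + ε * qchar (ZMod p) (-1) ^ (e / 2) * (p : ℤ) ^ (e / 2 - 1))
          + Multiset.replicate (p * (p ^ e - 1)) ((p : ℤ) ^ e - (p : ℤ) ^ (e - 1))
          + Multiset.replicate (p - 1) ((p : ℤ) ^ e)) ∧
    -- weight distribution, `e` odd, with `τ = ε η₀(-1)^{(e+1)/2}`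
    (Odd e →
      (C.toFinset.val.map fun c => (hammingNorm c : ℤ))
        = Multiset.replicate 1 (0 : ℤ)
          + Multiset.replicate ((p - 1) ^ 2 * p ^ e / 2)
              ((p : ℤ) ^ e - (p : ℤ) ^ (e - 1)
                - ε * qchar (ZMod p) (-1) ^ ((e + 1) / 2) * (p : ℤ) ^ ((e - 1) / 2))
          + Multiset.replicate ((p - 1) ^ 2 * p ^ e / 2)
              ((p : ℤ) ^ e - (p : ℤ) ^ (e - 1)
                + ε * qchar (ZMod p) (-1) ^ ((e + 1) / 2) * (p : ℤ) ^ ((e - 1) / 2))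
          + Multiset.replicate (2 * p ^ (e + 1) - p ^ e - p)
              ((p : ℤ) ^ e - (p : ℤ) ^ (e - 1))
          + Multiset.replicate (p - 1) ((p : ℤ) ^ e)) ∧
    -- self-orthogonality for `e ≥ 3`
    (3 ≤ e → C ⊆ dualCode C) ∧
    -- the dual code has dimension `p^e - e - 2`
    Nat.card (dualCode C) = p ^ (p ^ e - e - 2) ∧
    -- minimum distance of the dual code
    (e = 2 ∧ ε * qchar (ZMod p) (-1) = -1 → IsMinDist (dualCode C) 4) ∧
    (¬(e = 2 ∧ ε * qchar (ZMod p) (-1) = -1) → IsMinDist (dualCode C) 3) := by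
  subst hq hC
  exact ⟨hcq, stmt15_general hodd he hcq hRF.isWeaklyRegularBent⟩
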